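/- arXiv:1604.07094 — 3 statements merged into one kernel-verified Lean document; each statement's English description precedes it below -/
import Mathlib

section
/- Let n ≥ 3 and let L be a weighted Laplacian of a ring graph on n vertices. Let S = {u₁, u₂, …, u_k} be a nonempty subset of the vertices, listed in clockwise (cyclic) order, and set u_{k+1} = u₁. Then the grounded Laplacian L_ff and every cyclic segment submatrix L_{(u_j→u_{j+1})} appearing below are invertible, and (1/2)·tr(L_ff⁻¹) = Σ_{j=1}^{k} (1/2)·tr(L_{(u_j→u_{j+1})}⁻¹). -/
open Matrix

/-- `L` is a weighted Laplacian of a ring graph on `n + 3` (i.e. `≥ 3`) vertices,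
with indices taken modulo `n + 3` (addition/subtraction in `Fin (n+3)` is cyclic):
symmetric, negative on the two cyclic off-diagonals, zero elsewhere off the diagonal,
and all row sums zero. -/
def IsRingLaplacian {n : ℕ} (L : Matrix (Fin (n + 3)) (Fin (n + 3)) ℝ) : Prop :=
  L.IsSymm ∧
  (∀ i j : Fin (n + 3), j = i + 1 ∨ j = i - 1 → L i j < 0) ∧
  (∀ i j : Fin (n + 3), i ≠ j → j ≠ i + 1 → j ≠ i - 1 → L i j = 0) ∧
  (∀ i : Fin (n + 3), ∑ j, L i j = 0)

/-- The index set of the cyclic segment `(u → v)`: the vertices `u+1, …, v-1` strictly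
between `u` and `v` in clockwise order (all vertices other than `u` when `v = u`). -/
def CSegIdx {N : ℕ} (u v : Fin N) : Type :=
  {w : Fin N // 0 < (w - u).val ∧ (v = u ∨ (w - u).val < (v - u).val)}

instance {N : ℕ} (u v : Fin N) : Fintype (CSegIdx u v) := by
  unfold CSegIdx; infer_instance

instance {N : ℕ} (u v : Fin N) : DecidableEq (CSegIdx u v) := by
  unfold CSegIdx; infer_instance

/-- `L_{(u→v)}`: the principal submatrix of `L` on the vertices strictly between `u` and
`v` in clockwise order. -/
def cseg {N : ℕ} (L : Matrix (Fin N) (Fin N) ℝ) (u v : Fin N) :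
    Matrix (CSegIdx u v) (CSegIdx u v) ℝ :=
  L.submatrix (·.val) (·.val)

/-- The grounded Laplacian `L_ff`. -/
def grounded {N : ℕ} (L : Matrix (Fin N) (Fin N) ℝ) (S : Finset (Fin N)) :
    Matrix {i : Fin N // i ∉ S} {i : Fin N // i ∉ S} ℝ :=
  L.submatrix (·.val) (·.val)

lemma rc_val_sub {N : ℕ} (x y : Fin N) :
    (x - y).val = if y.val ≤ x.val then x.val - y.val else N + x.val - y.val := by
  have hx := x.isLt
  have hy := y.isLt
  rw [Fin.val_sub]
  split_ifs with h
  · have : N - y.val + x.val = (x.val - y.val) + N := by omega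
    rw [this, Nat.add_mod_right, Nat.mod_eq_of_lt (by omega)]
  · rw [Nat.mod_eq_of_lt (by omega)]; omega

lemma rc_isUnit {n : ℕ} (L : Matrix (Fin (n + 3)) (Fin (n + 3)) ℝ) (hL : IsRingLaplacian L)
    {ι : Type} [Fintype ι] [DecidableEq ι] (f : ι → Fin (n + 3)) (hf : Function.Injective f)
    (s : Fin (n + 3)) (hs : ∀ i, f i ≠ s) : IsUnit (L.submatrix f f).det := by
  classical
  obtain ⟨hsym, hneg, hzero, hrow⟩ := hL
  rw [isUnit_iff_ne_zero]
  intro hdet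
  obtain ⟨x, hx0, hx⟩ := Matrix.exists_mulVec_eq_zero_iff.mpr hdet
  apply hx0
  let y : Fin (n + 3) → ℝ := Function.extend f x 0
  have hyf : ∀ i, y (f i) = x i := fun i => hf.extend_apply x 0 i
  have hys : ∀ w, (¬ ∃ i, f i = w) → y w = 0 := fun w hw => by
    simp [y, Function.extend_apply' _ _ _ hw]
  have hsum : ∀ g : Fin (n + 3) → ℝ, (∑ w, g w * y w) = ∑ i, g (f i) * x i := by
    intro g
    rw [← Finset.sum_subset (Finset.subset_univ (Finset.univ.image f))]
    · rw [Finset.sum_image (fun a _ b _ h => hf h)]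
      simp [hyf]
    · intro w _ hw
      rw [hys w (by simpa using hw), mul_zero]
  have hq : ∑ v, (∑ w, L v w * y w) * y v = 0 := by
    rw [hsum (fun v => ∑ w, L v w * y w)]
    apply Finset.sum_eq_zero
    intro i _
    rw [hsum (fun w => L (f i) w)]
    have := congrFun hx i
    simp only [Matrix.mulVec, dotProduct, Matrix.submatrix_apply, Pi.zero_apply] at this
    rw [this, zero_mul]
  have hsq : ∑ v, ∑ w, -(L v w * (y v - y w) ^ 2) = 0 := by
    have e : ∀ v w, -(L v w * (y v - y w) ^ 2)
        = 2 * (L v w * y w * y v) - L v w * y v ^ 2 - L v w * y w ^ 2 := by intros; ring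
    simp only [e, Finset.sum_sub_distrib, ← Finset.mul_sum]
    have h1 : ∑ v, ∑ w, L v w * y w * y v = 0 := by
      simpa only [Finset.sum_mul] using hq
    have h2 : ∑ v, ∑ w, L v w * y v ^ 2 = 0 := by
      simp only [← Finset.sum_mul, hrow, zero_mul, Finset.sum_const_zero]
    have h3 : ∑ v, ∑ w, L v w * y w ^ 2 = 0 := by
      rw [Finset.sum_comm, ← h2]
      refine Finset.sum_congr rfl fun v _ => Finset.sum_congr rfl fun w _ => ?_
      rw [hsym.apply]
    rw [h1, h2, h3]; simp
  have hnn : ∀ v w, 0 ≤ -(L v w * (y v - y w) ^ 2) := by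
    intro v w
    by_cases h : v = w
    · simp [h]
    · have : L v w ≤ 0 := by
        by_cases h1 : w = v + 1 ∨ w = v - 1
        · exact (hneg v w h1).le
        · push Not at h1
          exact (hzero v w h h1.1 h1.2).le
      nlinarith [sq_nonneg (y v - y w)]
  have hstep : ∀ v, y (v + 1) = y v := by
    intro v
    have h1 := (Finset.sum_eq_zero_iff_of_nonneg
      (fun v _ => Finset.sum_nonneg fun w _ => hnn v w)).mp hsq v (Finset.mem_univ _)
    have h2 := (Finset.sum_eq_zero_iff_of_nonneg
      (fun w _ => hnn v w)).mp h1 (v + 1) (Finset.mem_univ _)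
    have h3 := hneg v (v + 1) (Or.inl rfl)
    have h4 : (y v - y (v + 1)) ^ 2 = 0 := by
      rcases mul_eq_zero.mp (neg_eq_zero.mp h2) with h | h
      · exact absurd h h3.ne
      · exact h
    have := pow_eq_zero_iff (two_ne_zero) |>.mp h4
    linarith
  have hconst : ∀ v, y v = y 0 := by
    intro v
    induction v using Fin.induction with
    | zero => rfl
    | succ i ih => rw [← Fin.coeSucc_eq_succ, hstep, ih]
  have hy0 : y s = 0 := hys s (by rintro ⟨i, hi⟩; exact hs i hi)
  ext i
  rw [← hyf, hconst, ← hconst s, hy0]; rfl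

lemma rc_mem {N k : ℕ} (u : Fin (k + 1) → Fin N)
    (hord : StrictMono fun i : Fin (k + 1) => (u i - u 0).val) (i : Fin (k + 1)) (w : Fin N) :
    (0 < (w - u i).val ∧ (u (i + 1) = u i ∨ (w - u i).val < (u (i + 1) - u i).val)) ↔
      ((u i - u 0).val < (w - u 0).val ∧ ∀ j, i < j → (w - u 0).val < (u j - u 0).val) := by
  have : NeZero N := ⟨by have := (u 0).isLt; omega⟩
  have e : ∀ a b : Fin N, a - b = (a - u 0) - (b - u 0) := fun a b => by
    apply Fin.ext
    simp only [rc_val_sub]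
    have := a.isLt
    have := b.isLt
    have := (u 0).isLt
    split_ifs <;> omega
  have h00 : (u 0 - u 0).val = 0 := by simp
  have hd := (w - u 0).isLt
  have ha := (u i - u 0).isLt
  rw [e w (u i), e (u (i + 1)) (u i), rc_val_sub (w - u 0), rc_val_sub (u (i+1) - u 0)]
  rcases Fin.eq_castSucc_or_eq_last i with ⟨i', rfl⟩ | rfl
  · rw [Fin.coeSucc_eq_succ]
    have hlt : (u i'.castSucc - u 0).val < (u i'.succ - u 0).val :=
      hord (Fin.castSucc_lt_succ)
    have hne : u i'.succ ≠ u i'.castSucc := by intro h; rw [h] at hlt; omega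
    have hb := (u i'.succ - u 0).isLt
    have hall : (∀ j, i'.castSucc < j → (w - u 0).val < (u j - u 0).val) ↔
        (w - u 0).val < (u i'.succ - u 0).val := by
      constructor
      · intro h; exact h _ Fin.castSucc_lt_succ
      · intro h j hj
        exact lt_of_lt_of_le h (hord.monotone (Fin.castSucc_lt_iff_succ_le.mp hj))
    rw [hall]
    simp only [hne, false_or]
    split_ifs <;> omega
  · rw [Fin.last_add_one]
    have hall : (∀ j, Fin.last k < j → (w - u 0).val < (u j - u 0).val) ↔ True := by
      simp only [iff_true]
      intro j hj
      exact absurd (Fin.le_last j) (not_le.mpr hj)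
    rw [hall, h00]
    have hz : u 0 = u (Fin.last k) ↔ (u (Fin.last k) - u 0).val = 0 := by
      constructor
      · intro h; rw [← h]; exact h00
      · intro h
        have := (hord.injective (a₁ := Fin.last k) (a₂ := 0) (by simp only [h, h00]))
        rw [this]
    rw [hz, and_true]
    clear hz hall h00 hord e
    generalize (u (Fin.last k) - u 0).val = a at *
    generalize (w - u 0).val = d at *
    split_ifs <;> constructor <;> intro h <;> omega

lemma rc_trace {κ : Type} [Fintype κ] [DecidableEq κ] {m : κ → Type} [∀ i, Fintype (m i)]
    [∀ i, DecidableEq (m i)] (A : ∀ i, Matrix (m i) (m i) ℝ) (hA : ∀ i, IsUnit (A i).det)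
    {ι : Type} [Fintype ι] [DecidableEq ι] (G : Matrix ι ι ℝ) (e : (Σ i, m i) ≃ ι)
    (hG : G.submatrix e e = Matrix.blockDiagonal' A) :
    (G⁻¹).trace = ∑ i, ((A i)⁻¹).trace := by
  have h1 : (Matrix.blockDiagonal' A)⁻¹ = Matrix.blockDiagonal' fun i => (A i)⁻¹ := by
    apply Matrix.inv_eq_right_inv
    rw [← Matrix.blockDiagonal'_mul]
    simp only [Matrix.mul_nonsing_inv _ (hA _)]
    exact Matrix.blockDiagonal'_one
  rw [← Matrix.trace_blockDiagonal', ← h1, ← hG, Matrix.inv_submatrix_equiv]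
  simp only [Matrix.trace, Matrix.diag, Matrix.submatrix_apply]
  exact (Equiv.sum_comp e (fun i => G⁻¹ i i)).symm

/-- for a weighted ring Laplacian and a nonempty leader set
`S = {u₀, …, u_k}` listed in clockwise cyclic order (the offsets from `u₀` are strictly
increasing; `u` at index `i + 1` wraps around to `u₀` after `u_k`), the grounded Laplacian
and all cyclic segment submatrices are invertible and `(1/2)·tr(L_ff⁻¹)` is the sum of
the cyclic segment contributions. -/
theorem ring_coherence_decomposition {n k : ℕ}
    (L : Matrix (Fin (n + 3)) (Fin (n + 3)) ℝ) (hL : IsRingLaplacian L)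
    (u : Fin (k + 1) → Fin (n + 3))
    (hord : StrictMono fun i : Fin (k + 1) => (u i - u 0).val) :
    IsUnit (grounded L (Finset.image u Finset.univ)).det ∧
    (∀ i : Fin (k + 1), IsUnit (cseg L (u i) (u (i + 1))).det) ∧
    (1 / 2) * ((grounded L (Finset.image u Finset.univ))⁻¹).trace =
      ∑ i : Fin (k + 1), (1 / 2) * ((cseg L (u i) (u (i + 1)))⁻¹).trace := by
  have hmem := rc_mem u hord
  have hd0 : (u 0 - u 0).val = 0 := by simp
  have hseg : ∀ i : Fin (k + 1), IsUnit (cseg L (u i) (u (i + 1))).det := by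
    intro i
    refine rc_isUnit L hL (fun w : CSegIdx (u i) (u (i + 1)) => w.val)
      Subtype.val_injective (u i) ?_
    rintro ⟨w, hw⟩ h
    have h' : w = u i := h
    subst h'
    simp at hw
  refine ⟨?_, hseg, ?_⟩
  · refine rc_isUnit L hL (fun w : {i // i ∉ Finset.image u Finset.univ} => w.val)
      Subtype.val_injective (u 0) ?_
    rintro ⟨w, hw⟩ h
    exact hw (by simp at h; simp [h])
  have hnot : ∀ i (w : CSegIdx (u i) (u (i + 1))), w.val ∉ Finset.image u Finset.univ := by
    rintro i ⟨w, hw⟩ h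
    simp only [Finset.mem_image, Finset.mem_univ, true_and] at h
    obtain ⟨j, rfl⟩ := h
    obtain ⟨h1, h2⟩ := (hmem i _).mp hw
    rcases le_or_gt j i with hj | hj
    · have := hord.monotone hj
      omega
    · have := h2 j hj
      omega
  let F : (Σ i, CSegIdx (u i) (u (i + 1))) → {i // i ∉ Finset.image u Finset.univ} :=
    fun p => ⟨p.2.val, hnot p.1 p.2⟩
  have hF : Function.Bijective F := by
    constructor
    · rintro ⟨i, w, hw⟩ ⟨j, w', hw'⟩ h
      have h : w = w' := congrArg Subtype.val h
      subst h
      have h1 := (hmem i _).mp hw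
      have h2 := (hmem j _).mp hw'
      rcases lt_trichotomy i j with hij | hij | hij
      · have := h1.2 j hij
        omega
      · subst hij; rfl
      · have := h2.2 i hij
        omega
    · rintro ⟨w, hw⟩
      simp only [Finset.mem_image, Finset.mem_univ, true_and, not_exists] at hw
      have hne : ∀ j, (u j - u 0).val ≠ (w - u 0).val := by
        intro j h
        exact hw j (sub_left_injective (Fin.ext h))
      let T := Finset.univ.filter fun j => (u j - u 0).val < (w - u 0).val
      have hT : T.Nonempty := ⟨0, by
        have := hne 0
        simp only [T, Finset.mem_filter, Finset.mem_univ, true_and]; omega⟩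
      have hm := T.max'_mem hT
      refine ⟨⟨T.max' hT, w, (hmem _ _).mpr ⟨?_, ?_⟩⟩, rfl⟩
      · simpa [T] using hm
      · intro j hj
        by_contra hc
        have : j ∈ T := by
          have := hne j
          simp only [T, Finset.mem_filter, Finset.mem_univ, true_and]; omega
        exact absurd (T.le_max' j this) (not_le.mpr hj)
  have hstep : ∀ i j (w w' : Fin (n + 3)), i ≠ j →
      ((u i - u 0).val < (w - u 0).val ∧ ∀ l, i < l → (w - u 0).val < (u l - u 0).val) →
      ((u j - u 0).val < (w' - u 0).val ∧ ∀ l, j < l → (w' - u 0).val < (u l - u 0).val) →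
      w' ≠ w + 1 := by
    rintro i j w w' hij ⟨h1, h2⟩ ⟨h3, h4⟩ rfl
    have e : w + 1 - u 0 = (w - u 0) + 1 := (sub_add_eq_add_sub _ _ _).symm
    rw [e] at h3 h4
    have hv : (w - u 0 + 1).val = 0 ∨ (w - u 0 + 1).val = (w - u 0).val + 1 := by
      rw [Fin.val_add_one (w - u 0)]
      split_ifs
      · exact Or.inl rfl
      · exact Or.inr rfl
    generalize (w - u 0 + 1).val = d' at *
    rcases lt_or_gt_of_ne hij with h | h
    · have := h2 j h
      omega
    · have := h4 i h
      omega
  rw [rc_trace (fun i => cseg L (u i) (u (i + 1))) hseg _ (Equiv.ofBijective F hF) ?_,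
    Finset.mul_sum]
  ext ⟨i, w⟩ ⟨j, w'⟩
  by_cases hij : i = j
  · subst hij
    rw [Matrix.blockDiagonal'_apply_eq]
    rfl
  · rw [Matrix.blockDiagonal'_apply_ne _ _ _ hij]
    have h1 := (hmem i _).mp w.2
    have h2 := (hmem j _).mp w'.2
    refine hL.2.2.1 w.val w'.val ?_ (hstep i j w.val w'.val hij h1 h2) ?_
    · intro hww
      rw [← hww] at h2
      rcases lt_or_gt_of_ne hij with h | h
      · have := h1.2 j h
        omega
      · have := h2.2 i h
        omega
    · intro h
      exact hstep j i w'.val w.val (Ne.symm hij) h2 h1 (by rw [h, sub_add_cancel])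
end

section
/- Let n ≥ 3 and let L be a weighted Laplacian of a ring graph on n vertices. Let S = {u₁, u₂, …, u_k} be a nonempty proper subset of the vertices, listed in clockwise (cyclic) order, and set u_{k+1} = u₁. Then λ_min(L_ff) = min over the nonempty cyclic segment submatrices L_{(u_j→u_{j+1})}, j = 1,…,k, of their smallest eigenvalues. -/
open Matrix

/-- The smallest eigenvalue of a real (symmetric) matrix, as the infimum of its spectrum. -/
noncomputable def lambdaMin {m : Type*} [Fintype m] [DecidableEq m]
    (M : Matrix m m ℝ) : ℝ :=
  sInf (spectrum ℝ M)

lemma mem_spec_iff {m : Type*} [Fintype m] [DecidableEq m] (M : Matrix m m ℝ) (μ : ℝ) :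
    μ ∈ spectrum ℝ M ↔ ∃ v : m → ℝ, v ≠ 0 ∧ M *ᵥ v = μ • v := by
  rw [spectrum.mem_iff, Matrix.isUnit_iff_isUnit_det, isUnit_iff_ne_zero, not_not,
    ← Matrix.exists_mulVec_eq_zero_iff]
  refine exists_congr fun v => and_congr_right fun _ => ?_
  rw [Matrix.sub_mulVec, sub_eq_zero, Algebra.algebraMap_eq_smul_one, Matrix.smul_mulVec,
    Matrix.one_mulVec, eq_comm]

lemma mulVec_block {m s : Type*} [Fintype m] [Fintype s] (M : Matrix m m ℝ) (f : s → m)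
    (hf : Function.Injective f) (v : m → ℝ) (a : m)
    (h : ∀ b, b ∉ Set.range f → M a b * v b = 0) :
    (M *ᵥ v) a = ∑ b, M a (f b) * v (f b) := by
  classical
  rw [← Finset.sum_image (s := Finset.univ) (g := f) (f := fun b => M a b * v b) (by
    intro x _ y _ h; exact hf h)]
  simp only [Matrix.mulVec, dotProduct]
  symm
  apply Finset.sum_subset (Finset.subset_univ _)
  intro b _ hb
  apply h
  simpa using hb

lemma spec_sub {m s : Type*} [Fintype m] [DecidableEq m] [Fintype s] [DecidableEq s]
    (M : Matrix m m ℝ) (f : s → m)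
    (hf : Function.Injective f) (h : ∀ a b, a ∉ Set.range f → M a (f b) = 0) :
    spectrum ℝ (M.submatrix f f) ⊆ spectrum ℝ M := by
  intro μ hμ
  rw [mem_spec_iff] at hμ ⊢
  obtain ⟨v, hv, hM⟩ := hμ
  refine ⟨Function.extend f v 0, ?_, ?_⟩
  · intro h0
    apply hv
    funext a
    have := congrFun h0 (f a)
    rw [hf.extend_apply] at this
    simpa using this
  · funext a
    rw [mulVec_block M f hf]
    · simp only [hf.extend_apply]
      by_cases ha : a ∈ Set.range f
      · obtain ⟨c, rfl⟩ := ha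
        have := congrFun hM c
        simp only [Pi.smul_apply, hf.extend_apply]
        exact this
      · rw [Pi.smul_apply, Function.extend_apply' _ _ _ (by simpa using ha)]
        simp [h a _ ha]
    · intro b hb
      rw [Function.extend_apply' _ _ _ (by simpa using hb)]
      simp

lemma spec_restrict {m s : Type*} [Fintype m] [DecidableEq m] [Fintype s] [DecidableEq s]
    (M : Matrix m m ℝ) (f : s → m)
    (hf : Function.Injective f) (h : ∀ a b, b ∉ Set.range f → M (f a) b = 0)
    (μ : ℝ) (v : m → ℝ) (hv : M *ᵥ v = μ • v) (c : s) (hc : v (f c) ≠ 0) :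
    μ ∈ spectrum ℝ (M.submatrix f f) := by
  rw [mem_spec_iff]
  refine ⟨v ∘ f, fun h0 => hc (congrFun h0 c), ?_⟩
  funext a
  have := congrFun hv (f a)
  rw [mulVec_block M f hf] at this
  · exact this
  · intro b hb
    rw [h a b hb, zero_mul]

lemma spec_finite {m : Type*} [Fintype m] [DecidableEq m] (M : Matrix m m ℝ) :
    (spectrum ℝ M).Finite := by
  rw [← Matrix.spectrum_toLin']
  exact Module.End.finite_spectrum _

lemma spec_nonempty {m : Type*} [Fintype m] [DecidableEq m] [Nonempty m] (M : Matrix m m ℝ)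
    (hM : M.IsSymm) : (spectrum ℝ M).Nonempty := by
  have h : M.IsHermitian := by
    rw [Matrix.IsHermitian, Matrix.conjTranspose_eq_transpose_of_trivial]; exact hM
  exact ⟨_, h.eigenvalues_mem_spectrum_real (Classical.arbitrary m)⟩

lemma fin_sub_val {n : ℕ} (x y : Fin (n + 3)) :
    (x - y).val = if y.val ≤ x.val then x.val - y.val else n + 3 + x.val - y.val := by
  have hx := x.2
  have hy := y.2
  rw [Fin.val_sub]
  split_ifs with h
  · rw [show n + 3 - y.val + x.val = (x.val - y.val) + (n + 3) by omega, Nat.add_mod_right,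
      Nat.mod_eq_of_lt (by omega)]
  · rw [Nat.mod_eq_of_lt (by omega)]; omega

lemma sub_val_d {n : ℕ} (x y z : Fin (n + 3)) :
    (x - y).val = if (y - z).val ≤ (x - z).val then (x - z).val - (y - z).val
      else n + 3 + (x - z).val - (y - z).val := by
  rw [← fin_sub_val, sub_sub_sub_cancel_right]

lemma seg_iff {n k : ℕ} (u : Fin (k + 1) → Fin (n + 3))
    (hord : StrictMono fun i : Fin (k + 1) => (u i - u 0).val) (i : Fin (k + 1))
    (w : Fin (n + 3)) :
    (0 < (w - u i).val ∧ (u (i + 1) = u i ∨ (w - u i).val < (u (i + 1) - u i).val)) ↔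
    ((u i - u 0).val < (w - u 0).val ∧
      ∀ j, i < j → (w - u 0).val < (u j - u 0).val) := by
  have hw := (w - u 0).2
  have hi := (u i - u 0).2
  have h00 : (u 0 - u 0).val = 0 := by simp
  have hinj : ∀ a b, u a = u b → a = b := fun a b h => hord.injective (by simp [h])
  by_cases hl : i = Fin.last k
  · have h1 : i + 1 = 0 := by rw [hl]; exact Fin.last_add_one k
    have h2 : (∀ j, i < j → (w - u 0).val < (u j - u 0).val) := by
      intro j hj; rw [hl] at hj; exact absurd hj (not_lt.2 (Fin.le_last j))
    rw [h1]
    by_cases h0 : i = 0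
    · subst h0
      simp [h00]
      intro _ j hj
      exact h2 j hj
    · have hp : (u 0 - u 0).val < (u i - u 0).val := hord (Fin.pos_iff_ne_zero.2 h0)
      have hne : u 0 ≠ u i := fun h => h0 (hinj _ _ h).symm
      rw [sub_val_d w (u i) (u 0), sub_val_d (u 0) (u i) (u 0)]
      rw [and_iff_left h2]
      simp only [hne, false_or]
      rw [h00] at *
      split_ifs <;> omega
  · have hlt : i < i + 1 := Fin.lt_add_one_iff.2 (lt_of_le_of_ne (Fin.le_last _) hl)
    have hp : (u i - u 0).val < (u (i+1) - u 0).val := hord hlt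
    have hne : u (i+1) ≠ u i := fun h => hlt.ne' (hinj _ _ h)
    have h2 : (∀ j, i < j → (w - u 0).val < (u j - u 0).val) ↔
        (w - u 0).val < (u (i+1) - u 0).val := by
      refine ⟨fun h => h _ hlt, fun h j hj => lt_of_lt_of_le h (hord.monotone ?_)⟩
      exact Fin.add_one_le_of_lt hj
    rw [h2, sub_val_d w (u i) (u 0), sub_val_d (u (i+1)) (u i) (u 0)]
    simp only [hne, false_or]
    have := (u (i+1) - u 0).2
    split_ifs <;> omega

theorem ring_lambdaMin_decomposition {n k : ℕ}
    (L : Matrix (Fin (n + 3)) (Fin (n + 3)) ℝ) (hL : IsRingLaplacian L)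
    (u : Fin (k + 1) → Fin (n + 3))
    (hord : StrictMono fun i : Fin (k + 1) => (u i - u 0).val)
    (hproper : Finset.image u Finset.univ ≠ Finset.univ) :
    lambdaMin (grounded L (Finset.image u Finset.univ)) =
      sInf { x : ℝ | ∃ i : Fin (k + 1),
        Nonempty (CSegIdx (u i) (u (i + 1))) ∧
        x = lambdaMin (cseg L (u i) (u (i + 1))) } := by
  set S := Finset.image u Finset.univ with hS
  have hmem : ∀ j, u j ∈ S := fun j => by simp [hS]
  have h00 : (u 0 - u 0).val = 0 := by simp
  have hdinj : ∀ x y : Fin (n+3), (x - u 0).val = (y - u 0).val → x = y := fun x y h =>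
    sub_left_injective (Fin.ext h)
  -- segments avoid S
  have hseg2 : ∀ i w, (0 < (w - u i).val ∧
      (u (i + 1) = u i ∨ (w - u i).val < (u (i + 1) - u i).val)) → w ∉ S := by
    intro i w hw hwS
    rw [seg_iff u hord] at hw
    obtain ⟨j, -, rfl⟩ := Finset.mem_image.1 hwS
    have := hord.lt_iff_lt.1 hw.1
    exact lt_irrefl _ (hw.2 j this)
  have hseg1 : ∀ w, w ∉ S → ∃ i, (0 < (w - u i).val ∧
      (u (i + 1) = u i ∨ (w - u i).val < (u (i + 1) - u i).val)) := by
    intro w hw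
    have hne : (Finset.univ.filter fun i => (u i - u 0).val < (w - u 0).val).Nonempty := by
      refine ⟨0, ?_⟩
      simp only [Finset.mem_filter, Finset.mem_univ, true_and, h00]
      rw [Nat.pos_iff_ne_zero]
      intro h
      exact hw (hdinj w (u 0) (by rw [h, h00]) ▸ hmem 0)
    refine ⟨_, (seg_iff u hord (Finset.max' _ hne) w).2 ⟨?_, ?_⟩⟩
    · exact (Finset.mem_filter.1 (Finset.max'_mem _ hne)).2
    · intro j hj
      by_contra hcon
      have hlt : (u j - u 0).val < (w - u 0).val := by
        refine lt_of_le_of_ne (not_lt.1 hcon) fun h => ?_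
        exact hw (hdinj _ _ h ▸ hmem j)
      exact absurd (Finset.le_max' _ j (by simpa using hlt)) (not_le.2 hj)
  have hstep : ∀ i w w', (0 < (w - u i).val ∧
      (u (i + 1) = u i ∨ (w - u i).val < (u (i + 1) - u i).val)) → w' ∉ S →
      (w' = w + 1 ∨ w' = w - 1) → (0 < (w' - u i).val ∧
      (u (i + 1) = u i ∨ (w' - u i).val < (u (i + 1) - u i).val)) := by
    intro i w w' hw hw' hadj
    rw [seg_iff u hord] at hw ⊢
    have hd : ∀ j, (u j - u 0).val ≠ (w' - u 0).val := fun j h => hw' (hdinj _ _ h ▸ hmem j)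
    have h0 := hd 0
    rw [h00] at h0
    have e1 : (1 : Fin (n+3)).val = 1 := rfl
    have hcase : (w' - u 0).val = (w - u 0).val + 1 ∨ (w' - u 0).val + 1 = (w - u 0).val := by
      have b := (w - u 0).2
      have b' := (w' - u 0).2
      rcases hadj with h | h
      · have h2 : w - u 0 = (w' - u 0) - 1 := by rw [h]; abel
        have := congrArg Fin.val h2
        rw [fin_sub_val (w' - u 0) 1, e1] at this
        split_ifs at this <;> omega
      · have h2 : w' - u 0 = (w - u 0) - 1 := by rw [h]; abel
        have := congrArg Fin.val h2
        rw [fin_sub_val (w - u 0) 1, e1] at this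
        split_ifs at this <;> omega
    refine ⟨?_, fun j hj => ?_⟩
    · have := hd i; have := hw.1; omega
    · have := hd j; have := hw.2 j hj; omega
  obtain ⟨hsym, -, hzero, -⟩ := hL
  let f : ∀ i, CSegIdx (u i) (u (i+1)) → {x : Fin (n+3) // x ∉ S} :=
    fun i a => ⟨a.1, hseg2 i a.1 a.2⟩
  have hf : ∀ i, Function.Injective (f i) := fun i a b h =>
    Subtype.ext (congrArg (fun x : {x : Fin (n+3) // x ∉ S} => x.1) h)
  have hblock : ∀ i, cseg L (u i) (u (i+1)) = (grounded L S).submatrix (f i) (f i) := fun i => rfl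
  have hz : ∀ i a b, b ∉ Set.range (f i) → grounded L S (f i a) b = 0 := by
    intro i a b hb
    have hn : ¬ (b.1 = a.1 + 1 ∨ b.1 = a.1 - 1) := fun h =>
      hb ⟨⟨b.1, hstep i a.1 b.1 a.2 b.2 h⟩, rfl⟩
    push Not at hn
    refine hzero a.1 b.1 (fun h => hb ⟨a, Subtype.ext h⟩) hn.1 hn.2
  have hgs : (grounded L S).IsSymm := hsym.submatrix _
  have hsub : ∀ i, spectrum ℝ (cseg L (u i) (u (i+1))) ⊆ spectrum ℝ (grounded L S) := by
    intro i
    rw [hblock]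
    refine spec_sub _ _ (hf i) fun a b ha => ?_
    rw [← hgs.apply]
    exact hz i b a ha
  have hcov : ∀ μ ∈ spectrum ℝ (grounded L S), ∃ i, Nonempty (CSegIdx (u i) (u (i+1))) ∧
      μ ∈ spectrum ℝ (cseg L (u i) (u (i+1))) := by
    intro μ hμ
    obtain ⟨v, hv, hM⟩ := (mem_spec_iff _ _).1 hμ
    obtain ⟨w, hw⟩ := Function.ne_iff.1 hv
    obtain ⟨i, hi⟩ := hseg1 w.1 w.2
    refine ⟨i, ⟨⟨w.1, hi⟩⟩, ?_⟩
    rw [hblock]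
    exact spec_restrict _ _ (hf i) (hz i) μ v hM ⟨w.1, hi⟩ hw
  have hne : Nonempty {x : Fin (n+3) // x ∉ S} := by
    by_contra h
    apply hproper
    ext x
    simp only [Finset.mem_univ, iff_true]
    by_contra hx
    exact h ⟨⟨x, hx⟩⟩
  have hgne := spec_nonempty _ hgs
  have hlow : ∀ i, Nonempty (CSegIdx (u i) (u (i+1))) →
      lambdaMin (cseg L (u i) (u (i+1))) ∈ spectrum ℝ (cseg L (u i) (u (i+1))) := fun i h =>
    (spec_nonempty _ (hsym.submatrix _)).csInf_mem (spec_finite _)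
  have hbd : ∀ x ∈ { x : ℝ | ∃ i : Fin (k + 1), Nonempty (CSegIdx (u i) (u (i + 1))) ∧
        x = lambdaMin (cseg L (u i) (u (i + 1))) }, lambdaMin (grounded L S) ≤ x := by
    rintro x ⟨i, hi, rfl⟩
    exact csInf_le (spec_finite _).bddBelow (hsub i (hlow i hi))
  obtain ⟨i, hi, hmi⟩ := hcov _ (hgne.csInf_mem (spec_finite _))
  apply le_antisymm
  · exact le_csInf ⟨_, i, hi, rfl⟩ hbd
  · refine (csInf_le ⟨_, hbd⟩ ⟨i, hi, rfl⟩).trans ?_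
    exact csInf_le (spec_finite _).bddBelow hmi
end

section
/- Let n ≥ 3, let L be a weighted Laplacian of a ring graph on n vertices, and let 1 ≤ k ≤ n−1. Then the maximum over all nonempty subsets S of the vertices with |S| ≤ k and S not equal to the full vertex set of λ_min(L_ff) equals the maximum over all j ∈ {1,…,k} and all sets of j distinct vertices u₁, …, u_j listed in clockwise (cyclic) order (with u_{j+1} = u₁, and not all vertices chosen) of the minimum of λ_min over the nonempty cyclic segment submatrices L_{(u_i→u_{i+1})}, i = 1,…,j. -/
open Matrix

theorem aux_sub_val {N : ℕ} (w u z : Fin N) :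
    (w - u).val = if (u - z).val ≤ (w - z).val then (w - z).val - (u - z).val
      else N + (w - z).val - (u - z).val := by
  have h0 : N ≠ 0 := by
    have := w.isLt
    omega
  haveI : NeZero N := ⟨h0⟩
  have h1 : w - u = (w - z) - (u - z) := by abel
  rw [h1]
  generalize w - z = a
  generalize u - z = b
  have ha := a.isLt
  have hb := b.isLt
  rw [Fin.sub_def]
  simp only
  split_ifs with h
  · rw [show N - b.val + a.val = (a.val - b.val) + N by omega, Nat.add_mod_right,
      Nat.mod_eq_of_lt (by omega)]
  · rw [Nat.mod_eq_of_lt (by omega)]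
    omega

def InSeg {N : ℕ} (u v w : Fin N) : Prop :=
  0 < (w - u).val ∧ (v = u ∨ (w - u).val < (v - u).val)

theorem inSeg_iff {N j : ℕ} [NeZero N] (u : Fin (j + 1) → Fin N)
    (hu : StrictMono fun i : Fin (j + 1) => (u i - u 0).val) (i : Fin (j + 1)) (w : Fin N) :
    InSeg (u i) (u (i + 1)) w ↔ (u i - u 0).val < (w - u 0).val ∧
      (i = Fin.last j ∨ (w - u 0).val < (u (i + 1) - u 0).val) := by
  have e1 := aux_sub_val w (u i) (u 0)
  have e2 := aux_sub_val (u (i+1)) (u i) (u 0)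
  have hw := (w - u 0).isLt
  have hi := (u i - u 0).isLt
  have h00 : (u 0 - u 0).val = 0 := by simp
  unfold InSeg
  rw [e1, e2]
  by_cases hl : i = Fin.last j
  · have h1 : i + 1 = 0 := by rw [hl]; simp
    rw [h1, h00]
    by_cases hz : i = 0
    · subst hz
      simp [hl]
    · have hpos : 0 < (u i - u 0).val := by
        have := hu (Fin.pos_iff_ne_zero.2 hz)
        simp only [h00] at this
        exact this
      have hne : u 0 ≠ u i := by
        intro h; rw [← h] at hpos; simp at hpos
      simp only [hl, true_or, and_true]
      rw [← hl]
      simp only [hne, false_or]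
      split_ifs <;> omega
  · have hlt : i < i + 1 := Fin.lt_add_one_iff.2 (Fin.lt_last_iff_ne_last.2 hl)
    have hm := hu hlt
    simp only at hm
    have hne : u (i + 1) ≠ u i := by
      intro h; rw [h] at hm; exact lt_irrefl _ hm
    simp only [hl, hne, false_or]
    split_ifs <;> omega

theorem seg_exists {N j : ℕ} [NeZero N] (u : Fin (j + 1) → Fin N)
    (hu : StrictMono fun i : Fin (j + 1) => (u i - u 0).val) (w : Fin N)
    (hw : ∀ i, u i ≠ w) : ∃ i, InSeg (u i) (u (i + 1)) w := by
  let F : Finset (Fin (j+1)) := Finset.univ.filter fun i => (u i - u 0).val ≤ (w - u 0).val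
  have hF : F.Nonempty := ⟨0, by simp [F]⟩
  have hmem := F.max'_mem hF
  refine ⟨F.max' hF, (inSeg_iff u hu _ w).2 ⟨?_, ?_⟩⟩
  · have h1 : (u (F.max' hF) - u 0).val ≤ (w - u 0).val := (Finset.mem_filter.1 hmem).2
    refine lt_of_le_of_ne h1 fun h => hw (F.max' hF) ?_
    exact sub_left_injective (Fin.ext h)
  · by_contra! hc
    have hlt : F.max' hF < F.max' hF + 1 :=
      Fin.lt_add_one_iff.2 (Fin.lt_last_iff_ne_last.2 hc.1)
    exact absurd (F.le_max' _ (Finset.mem_filter.2 ⟨Finset.mem_univ _, hc.2⟩)) (not_le.2 hlt)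

theorem seg_unique_lt {N j : ℕ} [NeZero N] (u : Fin (j + 1) → Fin N)
    (hu : StrictMono fun i : Fin (j + 1) => (u i - u 0).val) (w : Fin N)
    (i i' : Fin (j + 1)) (h : InSeg (u i) (u (i + 1)) w) (h' : InSeg (u i') (u (i' + 1)) w) :
    ¬ i < i' := by
  intro hlt
  rw [inSeg_iff u hu] at h h'
  have hl : i ≠ Fin.last j := Fin.lt_last_iff_ne_last.1 (lt_of_lt_of_le hlt (Fin.le_last _))
  have h2 := h.2.resolve_left hl
  have : i + 1 ≤ i' := Fin.add_one_le_of_lt hlt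
  have h3 : (u (i+1) - u 0).val ≤ (u i' - u 0).val := hu.monotone this
  have := h'.1
  omega

theorem seg_unique {N j : ℕ} [NeZero N] (u : Fin (j + 1) → Fin N)
    (hu : StrictMono fun i : Fin (j + 1) => (u i - u 0).val) (w : Fin N)
    (i i' : Fin (j + 1)) (h : InSeg (u i) (u (i + 1)) w) (h' : InSeg (u i') (u (i' + 1)) w) :
    i = i' :=
  le_antisymm (not_lt.1 (seg_unique_lt u hu w i' i h' h))
    (not_lt.1 (seg_unique_lt u hu w i i' h h'))

theorem seg_notMem {N j : ℕ} [NeZero N] (u : Fin (j + 1) → Fin N)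
    (hu : StrictMono fun i : Fin (j + 1) => (u i - u 0).val) (w : Fin N)
    (i : Fin (j + 1)) (h : InSeg (u i) (u (i + 1)) w) (l : Fin (j + 1)) : u l ≠ w := by
  rintro rfl
  rw [inSeg_iff u hu] at h
  have h1 : i < l := hu.lt_iff_lt.1 h.1
  have hl : i ≠ Fin.last j := Fin.lt_last_iff_ne_last.1 (lt_of_lt_of_le h1 (Fin.le_last _))
  have h2 : l < i + 1 := hu.lt_iff_lt.1 (h.2.resolve_left hl)
  exact absurd (Fin.add_one_le_of_lt h1) (not_le.2 h2)

theorem seg_succ {n : ℕ} (u v w : Fin (n + 3)) (h : InSeg u v w) (h1 : w + 1 ≠ u)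
    (h2 : w + 1 ≠ v) : InSeg u v (w + 1) := by
  have e : w + 1 - u = (w - u) + 1 := by abel
  have hne : (w - u) ≠ Fin.last _ := by
    intro h
    apply h1
    rw [← sub_eq_zero, e, h]; simp
  have e3 : (w + 1 - u).val = (w - u).val + 1 := by
    rw [e, Fin.val_add_one_of_lt (Fin.lt_last_iff_ne_last.2 hne)]
  have h4 : (w + 1 - u).val ≠ (v - u).val := fun h => h2 (sub_left_injective (Fin.ext h))
  refine ⟨by omega, h.2.imp id fun h5 => by omega⟩

theorem mem_spec {m : Type*} [Fintype m] [DecidableEq m] (M : Matrix m m ℝ) (r : ℝ) :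
    r ∈ spectrum ℝ M ↔ (Matrix.scalar m r - M).det = 0 := by
  rw [spectrum.mem_iff, Matrix.isUnit_iff_isUnit_det, isUnit_iff_ne_zero, not_not]
  rfl

theorem spec_block {m α : Type*} [Fintype m] [DecidableEq m] [Fintype α] [LinearOrder α]
    (M : Matrix m m ℝ) (b : m → α) (hM : ∀ x y, b x ≠ b y → M x y = 0) (r : ℝ) :
    r ∈ spectrum ℝ M ↔ ∃ a, (∃ x, b x = a) ∧ r ∈ spectrum ℝ (M.toSquareBlock b a) := by
  have hT : (Matrix.scalar m r - M).BlockTriangular b := by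
    intro x y hxy
    have hne : x ≠ y := by rintro rfl; exact lt_irrefl _ hxy
    simp [hM x y hxy.ne', hne]
  rw [mem_spec, hT.det, Finset.prod_eq_zero_iff]
  have key : ∀ a, (Matrix.scalar m r - M).toSquareBlock b a =
      Matrix.scalar _ r - M.toSquareBlock b a := by
    intro a
    ext x y
    simp [Matrix.toSquareBlock_def, Matrix.diagonal_apply, Subtype.ext_iff]
  simp only [key, mem_spec, Finset.mem_image, Finset.mem_univ, true_and]

theorem spec_equiv {m m' : Type*} [Fintype m] [DecidableEq m] [Fintype m'] [DecidableEq m']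
    (e : m ≃ m') (M : Matrix m' m' ℝ) : spectrum ℝ (M.submatrix e e) = spectrum ℝ M := by
  ext r
  rw [mem_spec, mem_spec, ← Matrix.det_submatrix_equiv_self e (Matrix.scalar m' r - M)]
  have : Matrix.scalar m r - M.submatrix e e = (Matrix.scalar m' r - M).submatrix e e := by
    ext x y
    simp [Matrix.diagonal_apply]
  rw [this]

theorem spec_good {m : Type*} [Fintype m] [DecidableEq m] [Nonempty m]
    (M : Matrix m m ℝ) (h : M.IsSymm) :
    (spectrum ℝ M).Nonempty ∧ BddBelow (spectrum ℝ M) := by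
  have hH : M.IsHermitian := by
    rw [Matrix.IsHermitian, Matrix.conjTranspose_eq_transpose_of_trivial]; exact h
  rw [hH.spectrum_real_eq_range_eigenvalues]
  exact ⟨Set.range_nonempty _, (Set.finite_range _).bddBelow⟩

theorem main_eq {n j : ℕ} (L : Matrix (Fin (n + 3)) (Fin (n + 3)) ℝ) (hL : IsRingLaplacian L)
    (u : Fin (j + 1) → Fin (n + 3))
    (hu : StrictMono fun i : Fin (j + 1) => (u i - u 0).val)
    (hne : Finset.image u Finset.univ ≠ Finset.univ) :
    lambdaMin (grounded L (Finset.image u Finset.univ)) =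
      sInf { y : ℝ | ∃ i : Fin (j + 1),
          Nonempty (CSegIdx (u i) (u (i + 1))) ∧
          y = lambdaMin (cseg L (u i) (u (i + 1))) } := by
  set S := Finset.image u Finset.univ with hS
  have hout : ∀ w : Fin (n+3), w ∉ S → ∀ i, u i ≠ w := by
    intro w hw i h
    exact hw (by rw [hS]; exact Finset.mem_image.2 ⟨i, Finset.mem_univ _, h⟩)
  have hin : ∀ w : Fin (n+3), (∀ i, u i ≠ w) → w ∉ S := by
    intro w hw h
    obtain ⟨i, -, hi⟩ := Finset.mem_image.1 h
    exact hw i hi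
  choose b hb using fun x : {i : Fin (n+3) // i ∉ S} => seg_exists u hu x.1 (hout x.1 x.2)
  have hbu : ∀ x i, InSeg (u i) (u (i+1)) x.1 → b x = i := fun x i h =>
    seg_unique u hu x.1 _ _ (hb x) h
  have hsucc : ∀ x y : {i : Fin (n+3) // i ∉ S}, y.1 = x.1 + 1 → b x = b y := by
    intro x y h
    symm
    apply hbu
    have h1 := hout y.1 y.2
    rw [h] at h1 ⊢
    exact seg_succ _ _ _ (hb x) (h1 _).symm (h1 _).symm
  have hM : ∀ x y, b x ≠ b y → grounded L S x y = 0 := by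
    intro x y hxy
    refine hL.2.2.1 x.1 y.1 ?_ ?_ ?_
    · intro h; exact hxy (by rw [Subtype.ext h])
    · intro h; exact hxy (hsucc x y h)
    · intro h; exact hxy (hsucc y x (by rw [h]; abel)).symm
  let e : ∀ a, {x // b x = a} ≃ CSegIdx (u a) (u (a+1)) := fun a =>
    { toFun := fun x => ⟨x.1.1, by have := hb x.1; rw [x.2] at this; exact this⟩
      invFun := fun w => ⟨⟨w.1, hin _ (seg_notMem u hu w.1 a w.2)⟩, hbu _ _ w.2⟩
      left_inv := fun x => rfl
      right_inv := fun w => rfl }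
  have hspec : ∀ r, r ∈ spectrum ℝ (grounded L S) ↔
      ∃ a, Nonempty (CSegIdx (u a) (u (a+1))) ∧ r ∈ spectrum ℝ (cseg L (u a) (u (a+1))) := by
    intro r
    rw [spec_block _ b hM]
    refine exists_congr fun a => and_congr ?_ ?_
    · rw [← (e a).nonempty_congr, nonempty_subtype]
    · rw [← spec_equiv (e a)]; rfl
  have hsymc : ∀ a, (cseg L (u a) (u (a+1))).IsSymm := fun a => hL.1.submatrix _
  have hsymg : (grounded L S).IsSymm := hL.1.submatrix _
  obtain ⟨w0, hw0⟩ : ∃ w, w ∉ S := by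
    by_contra! h
    exact hne (Finset.eq_univ_iff_forall.2 h)
  haveI : Nonempty {i : Fin (n+3) // i ∉ S} := ⟨⟨w0, hw0⟩⟩
  obtain ⟨hgn, hgb⟩ := spec_good _ hsymg
  have hfin : { y : ℝ | ∃ i : Fin (j + 1),
          Nonempty (CSegIdx (u i) (u (i + 1))) ∧
          y = lambdaMin (cseg L (u i) (u (i + 1))) }.Finite := by
    refine (Set.finite_range fun i : Fin (j+1) => lambdaMin (cseg L (u i) (u (i + 1)))).subset ?_
    rintro y ⟨i, -, rfl⟩
    exact ⟨i, rfl⟩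
  unfold lambdaMin at *
  apply le_antisymm
  · refine le_csInf ?_ ?_
    · obtain ⟨r, hr⟩ := hgn
      obtain ⟨a, ha, -⟩ := (hspec r).1 hr
      exact ⟨_, a, ha, rfl⟩
    · rintro y ⟨a, ha, rfl⟩
      exact csInf_le_csInf hgb (spec_good _ (hsymc a)).1 fun r hr => (hspec r).2 ⟨a, ha, hr⟩
  · refine le_csInf hgn fun r hr => ?_
    obtain ⟨a, ha, har⟩ := (hspec r).1 hr
    exact (csInf_le hfin.bddBelow ⟨a, ha, rfl⟩).trans (csInf_le (spec_good _ (hsymc a)).2 har)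

theorem exists_enum {N : ℕ} [NeZero N] (S : Finset (Fin N)) (hS : S.Nonempty) :
    ∃ j : ℕ, j + 1 = S.card ∧ ∃ u : Fin (j + 1) → Fin N,
      (StrictMono fun i : Fin (j + 1) => (u i - u 0).val) ∧ Finset.image u Finset.univ = S := by
  obtain ⟨z, hz⟩ := hS
  have hc : 0 < S.card := Finset.card_pos.2 ⟨z, hz⟩
  obtain ⟨j, hj⟩ : ∃ j, S.card = j + 1 := ⟨S.card - 1, by omega⟩
  let T := S.image fun x => x - z
  have hT : T.card = j + 1 := by
    rw [← hj]; exact Finset.card_image_of_injective _ sub_left_injective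
  let e := T.orderEmbOfFin hT
  have hr : Set.range e = T := Finset.range_orderEmbOfFin T hT
  have h0 : e 0 = 0 := by
    have : (0 : Fin N) ∈ Set.range e := by
      rw [hr]; exact Finset.mem_coe.2 (Finset.mem_image.2 ⟨z, hz, sub_self z⟩)
    obtain ⟨i, hi⟩ := this
    have := e.monotone (Fin.zero_le i)
    rw [hi] at this
    exact le_antisymm this (Fin.zero_le _)
  refine ⟨j, hj.symm, fun i => e i + z, ?_, ?_⟩
  · intro i i' h
    simp only [h0, zero_add, add_sub_cancel_right]
    exact e.strictMono h
  · ext w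
    simp only [Finset.mem_image, Finset.mem_univ, true_and]
    constructor
    · rintro ⟨i, rfl⟩
      have : e i ∈ T := Finset.orderEmbOfFin_mem T hT i
      obtain ⟨s, hs, hse⟩ := Finset.mem_image.1 this
      rw [← hse]; simpa using hs
    · intro hw
      have : (w - z) ∈ Set.range e := by
        rw [hr]; exact Finset.mem_coe.2 (Finset.mem_image.2 ⟨w, hw, rfl⟩)
      obtain ⟨i, hi⟩ := this
      exact ⟨i, by rw [hi]; simp⟩

/-- for a weighted ring Laplacian on `n + 3` vertices and
`1 ≤ k ≤ (n + 3) - 1`, the maximum of `λ_min(L_ff)` over all nonempty proper leader sets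
`S` with `|S| ≤ k` equals the maximum, over all `j ∈ {1,…,k}` (written `j'+1 ≤ k`) and
all proper families of `j'+1` distinct vertices listed in clockwise cyclic order, of the
minimum of `λ_min` over the nonempty cyclic segment blocks. -/
theorem ring_convergence_leader_selection {n k : ℕ} (hk1 : 1 ≤ k) (hkn : k ≤ n + 2)
    (L : Matrix (Fin (n + 3)) (Fin (n + 3)) ℝ) (hL : IsRingLaplacian L) :
    sSup { x : ℝ | ∃ S : Finset (Fin (n + 3)), S.Nonempty ∧ S.card ≤ k ∧
        S ≠ Finset.univ ∧ x = lambdaMin (grounded L S) } =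
    sSup { x : ℝ | ∃ j : ℕ, j + 1 ≤ k ∧ ∃ u : Fin (j + 1) → Fin (n + 3),
        (StrictMono fun i : Fin (j + 1) => (u i - u 0).val) ∧
        Finset.image u Finset.univ ≠ Finset.univ ∧
        x = sInf { y : ℝ | ∃ i : Fin (j + 1),
          Nonempty (CSegIdx (u i) (u (i + 1))) ∧
          y = lambdaMin (cseg L (u i) (u (i + 1))) } } := by

  congr 1
  ext x
  constructor
  · rintro ⟨S, hne, hc, hu, rfl⟩
    obtain ⟨j, hj, u, hm, rfl⟩ := exists_enum S hne
    exact ⟨j, by omega, u, hm, hu, main_eq L hL u hm hu⟩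
  · rintro ⟨j, hj, u, hm, hu, rfl⟩
    refine ⟨Finset.image u Finset.univ, ?_, ?_, hu, (main_eq L hL u hm hu).symm⟩
    · exact ⟨u 0, Finset.mem_image_of_mem _ (Finset.mem_univ _)⟩
    · exact Finset.card_image_le.trans (by simpa using hj)
end
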